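/- (Krylov–Safonov weak Harnack inequality, weak L^ε form) There exist constants ε > 0 and C > 0 depending only on n, λ, Λ such that: if a_{ij} : B₁ → ℝ are uniformly elliptic measurable coefficients and v ∈ C²(B₁) is nonnegative, satisfies Σ_{i,j} a_{ij}(x) ∂_{ij} v(x) ≤ 0 for all x ∈ B₁, and v(0) ≤ 1, then for every t > 0, |{x ∈ B_{1/2} : v(x) > t}| ≤ C t^{−ε}. -/

import Mathlib

open MeasureTheory Metric Set Filter
open scoped ENNReal NNReal Topology

noncomputable section

/-- Euclidean space `ℝⁿ`. -/
abbrev En (n : ℕ) := EuclideanSpace ℝ (Fin n)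

/-- The second partial derivative `∂_{ij} v (x)`. -/
def pd2 {n : ℕ} (v : En n → ℝ) (i j : Fin n) (x : En n) : ℝ :=
  fderiv ℝ (fun y => fderiv ℝ v y (EuclideanSpace.single i 1)) x (EuclideanSpace.single j 1)

/-- Measurable, uniformly elliptic coefficients on `Ω`:
`λ|ξ|² ≤ Σ aᵢⱼ(x) ξᵢ ξⱼ ≤ Λ|ξ|²` for every `x ∈ Ω` and all `ξ`. -/
def UnifEllipticOn {n : ℕ} (Ω : Set (En n)) (lam Lam : ℝ)
    (a : Fin n → Fin n → En n → ℝ) : Prop :=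
  (∀ i j, Measurable (a i j)) ∧
    ∀ x ∈ Ω, ∀ ξ : En n,
      lam * ∑ i, ξ i ^ 2 ≤ ∑ i, ∑ j, a i j x * ξ i * ξ j ∧
      ∑ i, ∑ j, a i j x * ξ i * ξ j ≤ Lam * ∑ i, ξ i ^ 2

/-!
For an opening `α`, slide paraboloids `-α/2 ‖· - y‖²` with vertices `y` in a fixed ball up from
below until they touch the graph of `v`, and let `A_α` be the set of contact points. Since
`v 0 ≤ 1`, the function `v` is at most `α` on `A_α`, so it suffices that the complement of `A_α`
shrinks by a fixed factor whenever `α` doubles.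

Assign to each point `x` the vertex `y` of a paraboloid of opening `α` that is highest at `x` among
those below the graph. This choice is monotone in `x`, so `x ↦ (x + y) / 2` expands distances at
least by the factor `1 / 2`. The paraboloid of opening `2 α` with vertex `(x + y) / 2` touches the
graph at a point `z`, which is outside `A_α` if `x` is, because the midpoints of distinct points are
distinct. Conversely the midpoint is `z + ∇v(z) / (2 α)`, and the equation bounds the Jacobian of
this map: contact gives `D²v(z) ≥ -2 α`, and then `tr (A D²v(z)) ≤ 0` bounds `D²v(z)` from above. By
the area formula, the measure of the complement of `A_α` is at most a multiple of that of
`A_{2α} \ A_α`.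

A radial barrier turns `v 0 ≤ 1` into a bound on the infimum of `v` over small balls. This keeps
vertices and contact points within a distance of `x` that is a negative power of `α`, so that the
radii lost along `α = a₀ 2^k` form a geometric series with a small sum.
-/

section SecondDerivatives

variable {E : Type*} [NormedAddCommGroup E] [NormedSpace ℝ E]

lemma deriv_deriv_nonneg_of_isLocalMin {g : ℝ → ℝ} {t : ℝ} (hg : ContinuousAt g t)
    (hmin : IsLocalMin g t) : 0 ≤ deriv (deriv g) t := by
  by_contra! hneg
  have hmax : IsLocalMax g t := isLocalMax_of_deriv_deriv_neg hneg hmin.deriv_eq_zero hg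
  have hconst : g =ᶠ[𝓝 t] fun _ => g t := by
    filter_upwards [hmin, hmax] with s h₁ h₂ using le_antisymm h₂ h₁
  have hzero : deriv (deriv g) t = 0 := by
    rw [hconst.deriv.deriv_eq]
    simp
  exact hneg.ne hzero

lemma deriv_deriv_comp_line {f : E → ℝ} {z : E} (hf : ContDiffAt ℝ 2 f z) (ξ : E) :
    deriv (deriv fun t : ℝ => f (z + t • ξ)) 0 = fderiv ℝ (fderiv ℝ f) z ξ ξ := by
  have hline (t : ℝ) : HasDerivAt (fun t : ℝ => z + t • ξ) ξ t := by
    simpa using ((hasDerivAt_id t).smul_const ξ).const_add z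
  have htends : Tendsto (fun t : ℝ => z + t • ξ) (𝓝 0) (𝓝 z) := by
    simpa [ContinuousAt] using (hline 0).continuousAt
  have hfirst : (deriv fun t : ℝ => f (z + t • ξ)) =ᶠ[𝓝 0]
      fun t => fderiv ℝ f (z + t • ξ) ξ := by
    filter_upwards [htends.eventually (hf.eventually (by simp))] with t ht
    exact ((ht.differentiableAt (by norm_num)).hasFDerivAt.comp_hasDerivAt t (hline t)).deriv
  have hf' : HasFDerivAt (fderiv ℝ f) (fderiv ℝ (fderiv ℝ f) z) (z + (0 : ℝ) • ξ) := by
    simpa using ((hf.fderiv_right (m := 1) le_rfl).differentiableAt one_ne_zero).hasFDerivAt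
  have hsecond : HasDerivAt (fun t : ℝ => fderiv ℝ f (z + t • ξ) ξ)
      (fderiv ℝ (fderiv ℝ f) z ξ ξ) 0 := by
    have hcomp := hf'.comp_hasDerivAt (0 : ℝ) (hline 0)
    have happly := hcomp.clm_apply (hasDerivAt_const (0 : ℝ) ξ)
    simpa using happly
  rw [hfirst.deriv_eq, hsecond.deriv]

lemma fderiv_fderiv_nonneg_of_isLocalMin {f : E → ℝ} {z : E} (hf : ContDiffAt ℝ 2 f z)
    (hmin : IsLocalMin f z) (ξ : E) : 0 ≤ fderiv ℝ (fderiv ℝ f) z ξ ξ := by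
  rw [← deriv_deriv_comp_line hf]
  have hcont : ContinuousAt (fun t : ℝ => z + t • ξ) 0 := by fun_prop
  refine deriv_deriv_nonneg_of_isLocalMin ?_ ?_
  · exact ContinuousAt.comp (g := f) (by simpa using hf.continuousAt) hcont
  · have htends : Tendsto (fun t : ℝ => z + t • ξ) (𝓝 0) (𝓝 z) := by
      simpa [ContinuousAt] using hcont
    filter_upwards [htends.eventually hmin] with t ht
    simpa using ht

lemma fderiv_fderiv_add {f g : E → ℝ} {z : E} (hf : ContDiffAt ℝ 2 f z)
    (hg : ContDiffAt ℝ 2 g z) :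
    fderiv ℝ (fderiv ℝ fun x => f x + g x) z =
      fderiv ℝ (fderiv ℝ f) z + fderiv ℝ (fderiv ℝ g) z := by
  have hsum : fderiv ℝ (fun x => f x + g x) =ᶠ[𝓝 z] fun x => fderiv ℝ f x + fderiv ℝ g x := by
    filter_upwards [hf.eventually (by simp), hg.eventually (by simp)] with x hfx hgx
    exact fderiv_fun_add (hfx.differentiableAt two_ne_zero) (hgx.differentiableAt two_ne_zero)
  rw [hsum.fderiv_eq, fderiv_fun_add
    ((hf.fderiv_right (m := 1) le_rfl).differentiableAt one_ne_zero)
    ((hg.fderiv_right (m := 1) le_rfl).differentiableAt one_ne_zero)]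

end SecondDerivatives

section Radial

variable {E : Type*} [NormedAddCommGroup E] [InnerProductSpace ℝ E]

lemma hasFDerivAt_norm_sub_sq (c x : E) :
    HasFDerivAt (fun x : E => ‖x - c‖ ^ 2) (2 • innerSL ℝ (x - c)) x := by
  simpa using ((hasFDerivAt_id x).sub_const c).norm_sq

lemma fderiv_fderiv_comp_norm_sub_sq {g : ℝ → ℝ} {c z : E}
    (hg : ContDiffAt ℝ 2 g (‖z - c‖ ^ 2)) (ξ ζ : E) :
    fderiv ℝ (fderiv ℝ fun x => g (‖x - c‖ ^ 2)) z ξ ζ =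
      4 * deriv (deriv g) (‖z - c‖ ^ 2) * inner ℝ (z - c) ξ * inner ℝ (z - c) ζ +
        2 * deriv g (‖z - c‖ ^ 2) * inner ℝ ξ ζ := by
  have hcont : ContinuousAt (fun x : E => ‖x - c‖ ^ 2) z :=
    (hasFDerivAt_norm_sub_sq c z).continuousAt
  have hfirst : (fderiv ℝ fun x : E => g (‖x - c‖ ^ 2)) =ᶠ[𝓝 z]
      fun x => deriv g (‖x - c‖ ^ 2) • (2 • innerSL ℝ (x - c)) := by
    filter_upwards [hcont.eventually (hg.eventually (by simp))] with x hx
    exact ((hx.differentiableAt two_ne_zero).hasDerivAt.comp_hasFDerivAt x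
      (hasFDerivAt_norm_sub_sq c x)).fderiv
  have hg' : HasDerivAt (deriv g) (deriv (deriv g) (‖z - c‖ ^ 2)) (‖z - c‖ ^ 2) :=
    ((hg.derivWithin (m := 1) le_rfl).differentiableAt one_ne_zero).hasDerivAt
  have hinner : HasFDerivAt (fun x : E => 2 • innerSL ℝ (x - c)) (2 • innerSL ℝ) z :=
    (((innerSL ℝ).hasFDerivAt).comp z ((hasFDerivAt_id z).sub_const c)).const_smul 2
  have hcomp : HasFDerivAt (fun x : E => deriv g (‖x - c‖ ^ 2)) _ z :=
    HasDerivAt.comp_hasFDerivAt (h₂ := deriv g) z hg' (hasFDerivAt_norm_sub_sq c z)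
  rw [hfirst.fderiv_eq, (hcomp.fun_smul hinner).fderiv]
  have hinnerSL : innerSL ℝ ξ ζ = inner ℝ ξ ζ := rfl
  simp only [map_sub, add_apply, smul_apply, ContinuousLinearMap.smulRight_apply, sub_apply,
    coe_innerSL_apply, nsmul_eq_mul, Nat.cast_ofNat, smul_eq_mul, inner_sub_left]
  linear_combination 2 * deriv g (‖z - c‖ ^ 2) * hinnerSL

end Radial

section Hessian

open scoped Matrix

/-- The Hessian matrix `(∂_{ij} v (x))_{ij}`. -/
def hessian {n : ℕ} (v : En n → ℝ) (x : En n) : Matrix (Fin n) (Fin n) ℝ :=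
  Matrix.of fun i j => pd2 v i j x

variable {n : ℕ} {f g : En n → ℝ} {z : En n}

lemma hessian_apply (hf : ContDiffAt ℝ 2 f z) (i j : Fin n) :
    hessian f z i j =
      fderiv ℝ (fderiv ℝ f) z (EuclideanSpace.single i 1) (EuclideanSpace.single j 1) := by
  have hf' : DifferentiableAt ℝ (fderiv ℝ f) z :=
    (hf.fderiv_right (m := 1) le_rfl).differentiableAt one_ne_zero
  rw [hf.isSymmSndFDerivAt (by simp)]
  simp [hessian, pd2, fderiv_clm_apply hf' (differentiableAt_const _)]

lemma hessian_isHermitian (hf : ContDiffAt ℝ 2 f z) : (hessian f z).IsHermitian := by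
  ext i j
  simp only [Matrix.conjTranspose_apply, star_trivial, hessian_apply hf]
  exact hf.isSymmSndFDerivAt (by simp) _ _

lemma hessian_add (hf : ContDiffAt ℝ 2 f z) (hg : ContDiffAt ℝ 2 g z) :
    hessian (fun x => f x + g x) z = hessian f z + hessian g z := by
  ext i j
  simp [hessian_apply hf, hessian_apply hg, hessian_apply (hf.add hg), fderiv_fderiv_add hf hg]

lemma dotProduct_hessian_mulVec (hf : ContDiffAt ℝ 2 f z) (ξ ζ : En n) :
    ξ ⬝ᵥ hessian f z *ᵥ ζ = fderiv ℝ (fderiv ℝ f) z ξ ζ := by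
  have hexpand (η : En n) : η = ∑ i, η i • EuclideanSpace.single i (1 : ℝ) := by
    ext k
    simp [Finset.sum_apply, Pi.single_apply]
  conv_rhs => rw [hexpand ξ, hexpand ζ]
  simp only [map_sum, map_smul, sum_apply, smul_apply, smul_eq_mul, dotProduct, Matrix.mulVec,
    Finset.mul_sum, hessian_apply hf]
  rw [Finset.sum_comm]
  exact Finset.sum_congr rfl fun i _ => Finset.sum_congr rfl fun j _ => by ring

lemma hessian_posSemidef_of_isLocalMin (hf : ContDiffAt ℝ 2 f z) (hmin : IsLocalMin f z) :
    (hessian f z).PosSemidef := by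
  refine .of_dotProduct_mulVec_nonneg (hessian_isHermitian hf) fun ξ => ?_
  have hquad := dotProduct_hessian_mulVec hf (WithLp.toLp 2 ξ) (WithLp.toLp 2 ξ)
  rw [star_trivial, hquad]
  exact fderiv_fderiv_nonneg_of_isLocalMin hf hmin _

lemma hessian_comp_norm_sub_sq {h : ℝ → ℝ} {c : En n} (hh : ContDiffAt ℝ 2 h (‖z - c‖ ^ 2)) :
    hessian (fun x => h (‖x - c‖ ^ 2)) z =
      (4 * deriv (deriv h) (‖z - c‖ ^ 2)) • Matrix.vecMulVec (z - c) (z - c) +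
        (2 * deriv h (‖z - c‖ ^ 2)) • (1 : Matrix (Fin n) (Fin n) ℝ) := by
  have hsq : ContDiffAt ℝ 2 (fun x : En n => ‖x - c‖ ^ 2) z :=
    (contDiffAt_id.sub contDiffAt_const).norm_sq ℝ
  have hcomp : ContDiffAt ℝ 2 (fun x => h (‖x - c‖ ^ 2)) z := ContDiffAt.comp z hh hsq
  ext i j
  have hinner (i : Fin n) : inner ℝ (z - c) (EuclideanSpace.single i 1) = z i - c i := by
    simp [EuclideanSpace.inner_single_right]
  have hone : inner ℝ (EuclideanSpace.single i (1 : ℝ)) (EuclideanSpace.single j (1 : ℝ)) =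
      (1 : Matrix (Fin n) (Fin n) ℝ) i j := by
    simp [EuclideanSpace.inner_single_right, Matrix.one_apply, eq_comm]
  rw [hessian_apply hcomp, fderiv_fderiv_comp_norm_sub_sq hh, hinner, hinner, hone, mul_assoc]
  rfl

end Hessian

section Matrices

open scoped Matrix

variable {ι : Type*} [Fintype ι]

lemma det_le_trace_pow_card [DecidableEq ι] {P : Matrix ι ι ℝ} (hP : P.PosSemidef) :
    P.det ≤ P.trace ^ Fintype.card ι := by
  have htrace : P.trace = ∑ i, hP.1.eigenvalues i := by simpa using hP.1.trace_eq_sum_eigenvalues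
  calc P.det = ∏ i, hP.1.eigenvalues i := by simpa using hP.1.det_eq_prod_eigenvalues
    _ ≤ ∏ _i : ι, P.trace := Finset.prod_le_prod (fun i _ => hP.eigenvalues_nonneg i)
        fun i hi => htrace ▸ Finset.single_le_sum (fun j _ => hP.eigenvalues_nonneg j) hi
    _ = P.trace ^ Fintype.card ι := by simp

lemma trace_mul_nonneg {A P : Matrix ι ι ℝ} (hA : ∀ ξ, 0 ≤ ξ ⬝ᵥ A *ᵥ ξ)
    (hP : P.PosSemidef) : 0 ≤ (A * P).trace := by
  classical
  obtain ⟨B, rfl⟩ : ∃ B : Matrix ι ι ℝ, P = B.conjTranspose * B := by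
    open scoped MatrixOrder in
    exact CStarAlgebra.nonneg_iff_eq_star_mul_self.mp hP.nonneg
  rw [← Matrix.mul_assoc, Matrix.trace_mul_comm, ← Matrix.mul_assoc]
  exact Finset.sum_nonneg fun k _ => by simpa [Matrix.mul_mul_apply] using hA (B k)

end Matrices

section Supersolutions

open scoped Matrix

/-- Elliptic matrices, not necessarily symmetric, normalised to have lower ellipticity constant
`1`; the trace bound `q` replaces the upper ellipticity constant. -/
structure IsNormalizedElliptic {ι : Type*} [Fintype ι] (q : ℕ) (A : Matrix ι ι ℝ) : Prop where
  dotProduct_self_le (ξ : ι → ℝ) : ξ ⬝ᵥ ξ ≤ ξ ⬝ᵥ A *ᵥ ξ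
  trace_le : A.trace ≤ q

lemma IsNormalizedElliptic.trace_le_trace_mul {ι : Type*} [Fintype ι] {q : ℕ}
    {A P : Matrix ι ι ℝ} (hA : IsNormalizedElliptic q A) (hP : P.PosSemidef) :
    P.trace ≤ (A * P).trace := by
  classical
  have hsub : 0 ≤ ((A - 1) * P).trace := trace_mul_nonneg (fun ξ => by
    simpa [Matrix.sub_mulVec, dotProduct_sub] using hA.dotProduct_self_le ξ) hP
  simpa [sub_mul] using hsub

/-- Nonnegative `C²` functions on the unit ball that are supersolutions of the extremal operator
of the class `IsNormalizedElliptic q`: at each point, `tr (A D²v) ≤ 0` for some `A` in the class. -/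
structure IsSupersolution {n : ℕ} (q : ℕ) (v : En n → ℝ) : Prop where
  contDiffOn : ContDiffOn ℝ 2 v (ball 0 1)
  nonneg : ∀ x ∈ ball (0 : En n) 1, 0 ≤ v x
  exists_trace_mul_hessian_nonpos : ∀ x ∈ ball (0 : En n) 1, ∃ A : Matrix (Fin n) (Fin n) ℝ,
    IsNormalizedElliptic q A ∧ (A * hessian v x).trace ≤ 0

variable {n q : ℕ} {v : En n → ℝ}

lemma isNormalizedElliptic_inv_smul {lam Lam : ℝ} {a : Matrix (Fin n) (Fin n) ℝ}
    (hlam : 0 < lam) (hq : n * Lam ≤ q * lam)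
    (ha : ∀ ξ : En n, lam * ∑ i, ξ i ^ 2 ≤ ∑ i, ∑ j, a i j * ξ i * ξ j ∧
      ∑ i, ∑ j, a i j * ξ i * ξ j ≤ Lam * ∑ i, ξ i ^ 2) :
    IsNormalizedElliptic q (lam⁻¹ • a) where
  dotProduct_self_le ξ := by
    have hquad : ξ ⬝ᵥ a *ᵥ ξ = ∑ i, ∑ j, a i j * ξ i * ξ j := by
      simp only [dotProduct, Matrix.mulVec, Finset.mul_sum]
      exact Finset.sum_congr rfl fun i _ => Finset.sum_congr rfl fun j _ => by ring
    have hself : ξ ⬝ᵥ ξ = ∑ i, ξ i ^ 2 := Finset.sum_congr rfl fun i _ => (sq (ξ i)).symm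
    rw [Matrix.smul_mulVec, dotProduct_smul, smul_eq_mul, hquad, hself, inv_mul_eq_div,
      le_div_iff₀' hlam]
    exact (ha (WithLp.toLp 2 ξ)).1
  trace_le := by
    have hdiag (i : Fin n) : a i i ≤ Lam := by
      simpa [Pi.single_apply] using (ha (EuclideanSpace.single i 1)).2
    have htrace : a.trace ≤ n * Lam := by
      simpa [Matrix.trace] using
        Finset.sum_le_card_nsmul Finset.univ (fun i => a i i) Lam fun i _ => hdiag i
    rw [Matrix.trace_smul, smul_eq_mul, inv_mul_eq_div, div_le_iff₀ hlam]
    exact htrace.trans hq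

lemma trace_mul_hessian {z : En n} (hv : ContDiffAt ℝ 2 v z) (a : Matrix (Fin n) (Fin n) ℝ) :
    (a * hessian v z).trace = ∑ i, ∑ j, a i j * pd2 v i j z := by
  simp only [Matrix.trace, Matrix.diag_apply, Matrix.mul_apply]
  refine Finset.sum_congr rfl fun i _ => Finset.sum_congr rfl fun j _ => ?_
  rw [← (hessian_isHermitian hv).apply, star_trivial]
  rfl

lemma isSupersolution_of_elliptic {lam Lam : ℝ} {a : Fin n → Fin n → En n → ℝ}
    (hlam : 0 < lam) (hq : n * Lam ≤ q * lam)
    (ha : ∀ x ∈ ball (0 : En n) 1, ∀ ξ : En n,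
      lam * ∑ i, ξ i ^ 2 ≤ ∑ i, ∑ j, a i j x * ξ i * ξ j ∧
      ∑ i, ∑ j, a i j x * ξ i * ξ j ≤ Lam * ∑ i, ξ i ^ 2)
    (hv : ContDiffOn ℝ 2 v (ball 0 1)) (hv₀ : ∀ x ∈ ball (0 : En n) 1, 0 ≤ v x)
    (hsuper : ∀ x ∈ ball (0 : En n) 1, ∑ i, ∑ j, a i j x * pd2 v i j x ≤ 0) :
    IsSupersolution q v where
  contDiffOn := hv
  nonneg := hv₀
  exists_trace_mul_hessian_nonpos x hx := by
    refine ⟨lam⁻¹ • Matrix.of fun i j => a i j x,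
      isNormalizedElliptic_inv_smul hlam hq (ha x hx), ?_⟩
    rw [Matrix.smul_mul, Matrix.trace_smul,
      trace_mul_hessian (hv.contDiffAt (isOpen_ball.mem_nhds hx))]
    exact mul_nonpos_of_nonneg_of_nonpos (inv_nonneg.2 hlam.le) (hsuper x hx)

namespace IsSupersolution

lemma contDiffAt (hv : IsSupersolution q v) {z : En n} (hz : z ∈ ball (0 : En n) 1) :
    ContDiffAt ℝ 2 v z :=
  hv.contDiffOn.contDiffAt (isOpen_ball.mem_nhds hz)

lemma exists_trace_hessian_le (hv : IsSupersolution q v) {w : En n → ℝ} {z : En n}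
    (hz : z ∈ ball (0 : En n) 1) (hw : ContDiffAt ℝ 2 w z)
    (hmin : IsLocalMin (fun x => v x + w x) z) :
    ∃ A : Matrix (Fin n) (Fin n) ℝ, IsNormalizedElliptic q A ∧
      (hessian (fun x => v x + w x) z).trace ≤ (A * hessian w z).trace := by
  obtain ⟨A, hA, hAv⟩ := hv.exists_trace_mul_hessian_nonpos z hz
  have hle := hA.trace_le_trace_mul
    (hessian_posSemidef_of_isLocalMin ((hv.contDiffAt hz).add hw) hmin)
  refine ⟨A, hA, hle.trans ?_⟩
  rw [hessian_add (hv.contDiffAt hz) hw, mul_add, Matrix.trace_add]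
  linarith

lemma add_nonneg_of_trace_mul_hessian_neg (hv : IsSupersolution q v) {w : En n → ℝ}
    {K : Set (En n)} (hK : IsCompact K) (hK₁ : K ⊆ ball 0 1) (hw : ContinuousOn w K)
    (hw₂ : ∀ z ∈ interior K, ContDiffAt ℝ 2 w z)
    (hneg : ∀ z ∈ interior K, ∀ A, IsNormalizedElliptic q A → (A * hessian w z).trace < 0)
    (hbd : ∀ z ∈ K \ interior K, 0 ≤ v z + w z) {x : En n} (hx : x ∈ K) : 0 ≤ v x + w x := by
  obtain ⟨z, hzK, hzmin⟩ := hK.exists_isMinOn ⟨x, hx⟩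
    ((hv.contDiffOn.continuousOn.mono hK₁).add hw)
  refine (hbd z ⟨hzK, fun hz => ?_⟩).trans (hzmin hx)
  have hmin : IsLocalMin (fun x => v x + w x) z := hzmin.isLocalMin (mem_interior_iff_mem_nhds.1 hz)
  obtain ⟨A, hA, hle⟩ := hv.exists_trace_hessian_le (hK₁ hzK) (hw₂ z hz) hmin
  have hpsd := hessian_posSemidef_of_isLocalMin ((hv.contDiffAt (hK₁ hzK)).add (hw₂ z hz)) hmin
  exact (hpsd.trace_nonneg.trans hle).not_gt (hneg z hz A hA)

end IsSupersolution

end Supersolutions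

section Barrier

open scoped Matrix

variable {n q : ℕ} {v : En n → ℝ} {c x : En n} {r R ρ M : ℝ}

lemma trace_mul_hessian_comp_norm_sub_sq {h : ℝ → ℝ} {z : En n} (A : Matrix (Fin n) (Fin n) ℝ)
    (hh : ContDiffAt ℝ 2 h (‖z - c‖ ^ 2)) :
    (A * hessian (fun x => h (‖x - c‖ ^ 2)) z).trace =
      4 * deriv (deriv h) (‖z - c‖ ^ 2) * ((z - c) ⬝ᵥ A *ᵥ (z - c)) +
        2 * deriv h (‖z - c‖ ^ 2) * A.trace := by
  rw [hessian_comp_norm_sub_sq hh, mul_add, Matrix.mul_smul, Matrix.mul_smul, mul_one,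
    Matrix.trace_add, Matrix.trace_smul, Matrix.trace_smul, Matrix.mul_vecMulVec,
    Matrix.trace_vecMulVec, dotProduct_comm]
  rfl

lemma deriv_mul_sub_zpow (β b : ℝ) (m : ℤ) :
    (deriv fun s : ℝ => β * (b - s ^ m)) = fun s => -(β * m) * s ^ (m - 1) := by
  funext s
  rw [deriv_const_mul_field, deriv_const_sub, deriv_zpow]
  ring

lemma contDiffAt_mul_sub_zpow_neg (β b : ℝ) (q : ℕ) {s : ℝ} (hs : s ≠ 0) :
    ContDiffAt ℝ 2 (fun s : ℝ => β * (b - s ^ (-q : ℤ))) s := by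
  have hne : s ^ q ≠ 0 := pow_ne_zero q hs
  simp only [zpow_neg, zpow_natCast]
  fun_prop (disch := assumption)

lemma trace_mul_hessian_barrier_neg {A : Matrix (Fin n) (Fin n) ℝ} {β : ℝ} {z : En n}
    (hA : IsNormalizedElliptic q A) (hq : 0 < q) (hβ : 0 < β) (b : ℝ) (hz : z ≠ c) :
    (A * hessian (fun x => β * (b - (‖x - c‖ ^ 2) ^ (-q : ℤ))) z).trace < 0 := by
  have hs : 0 < ‖z - c‖ ^ 2 := by
    have := norm_sub_pos_iff.2 hz
    positivity
  have hquad : ‖z - c‖ ^ 2 ≤ (z - c) ⬝ᵥ A *ᵥ (z - c) := by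
    have hself := hA.dotProduct_self_le (z - c)
    rwa [← real_inner_self_eq_norm_sq, EuclideanSpace.inner_eq_star_dotProduct, star_trivial]
  have htr := hA.trace_le
  rw [trace_mul_hessian_comp_norm_sub_sq (h := fun s => β * (b - s ^ (-q : ℤ))) A
    (contDiffAt_mul_sub_zpow_neg β b q hs.ne'), deriv_mul_sub_zpow, deriv_const_mul_field,
    deriv_zpow]
  set s := ‖z - c‖ ^ 2
  set Q := (z - c) ⬝ᵥ A *ᵥ (z - c)
  have hpow : s ^ (-q - 1 : ℤ) = s ^ (-q - 1 - 1 : ℤ) * s := by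
    rw [← zpow_add_one₀ hs.ne', sub_add_cancel]
  have hmain : A.trace * s < 2 * (q + 1) * Q := by nlinarith
  calc _ = 2 * β * q * s ^ (-q - 1 - 1 : ℤ) * (A.trace * s - 2 * (q + 1) * Q) := by
        simp only [hpow]
        push_cast
        ring
    _ < 0 := mul_neg_of_pos_of_neg (by positivity) (sub_neg.2 hmain)

lemma norm_sub_eq_of_notMem_interior_annulus (hx : x ∈ closedBall c R \ ball c r)
    (hx' : x ∉ interior (closedBall c R \ ball c r)) : ‖x - c‖ = r ∨ ‖x - c‖ = R := by
  contrapose! hx'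
  have hle : r ≤ ‖x - c‖ ∧ ‖x - c‖ ≤ R := by simpa [dist_eq_norm, and_comm] using hx
  refine interior_maximal (sdiff_subset_sdiff ball_subset_closedBall ball_subset_closedBall)
    (isOpen_ball.sdiff isClosed_closedBall) ?_
  simpa [dist_eq_norm] using ⟨hle.2.lt_of_ne hx'.2, hle.1.lt_of_ne' hx'.1⟩

-- `w` below vanishes on the outer sphere and is at least `-M` on the inner one.
lemma IsSupersolution.barrier_le (hv : IsSupersolution q v) (hq : 0 < q) (hR : ‖c‖ + R < 1)
    (hr : 0 < r) (hM₀ : 0 < M) (hM : ∀ y ∈ closedBall c r, M ≤ v y)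
    (hx : x ∈ closedBall c R \ ball c r) :
    M * r ^ (2 * q) * ((‖x - c‖ ^ (2 * q))⁻¹ - (R ^ (2 * q))⁻¹) ≤ v x := by
  set K := closedBall c R \ ball c r
  set β := M * r ^ (2 * q)
  set w : En n → ℝ := fun x => β * ((R ^ (2 * q))⁻¹ - (‖x - c‖ ^ 2) ^ (-q : ℤ)) with hw
  have hw_apply (y : En n) : w y = -(β * ((‖y - c‖ ^ (2 * q))⁻¹ - (R ^ (2 * q))⁻¹)) := by
    simp only [hw, zpow_neg, zpow_natCast, ← pow_mul]
    ring
  have hnorm : ∀ y ∈ K, r ≤ ‖y - c‖ ∧ ‖y - c‖ ≤ R := fun y hy => by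
    simpa [K, dist_eq_norm, and_comm] using hy
  have hK₁ : K ⊆ ball 0 1 := sdiff_subset.trans
    (closedBall_subset_ball' (by rwa [dist_zero_right, add_comm]))
  have hne : ∀ y ∈ K, y ≠ c := fun y hy => norm_sub_pos_iff.1 (hr.trans_le (hnorm y hy).1)
  have hsmooth : ∀ y ∈ K, ContDiffAt ℝ 2 w y := fun y hy => by
    have hsq : ContDiffAt ℝ 2 (fun x : En n => ‖x - c‖ ^ 2) y :=
      (contDiffAt_id.sub contDiffAt_const).norm_sq ℝ
    exact ContDiffAt.comp (g := fun s : ℝ => β * ((R ^ (2 * q))⁻¹ - s ^ (-q : ℤ))) y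
      (contDiffAt_mul_sub_zpow_neg β _ q (pow_ne_zero 2 (norm_sub_pos_iff.2 (hne y hy)).ne')) hsq
  have hbd : ∀ y ∈ K \ interior K, 0 ≤ v y + w y := by
    intro y ⟨hyK, hy⟩
    have hvy := hv.nonneg y (hK₁ hyK)
    rcases norm_sub_eq_of_notMem_interior_annulus hyK hy with h | h <;> rw [hw_apply, h]
    · have hMy := hM y (by simp [dist_eq_norm, h])
      have hβr : β * (r ^ (2 * q))⁻¹ = M := mul_inv_cancel_right₀ (by positivity) M
      have hβR : 0 ≤ β * ((R ^ q) ^ 2)⁻¹ := by positivity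
      rw [← pow_mul, mul_comm q] at hβR
      linarith
    · linarith
  have hpos := hv.add_nonneg_of_trace_mul_hessian_neg
    ((isCompact_closedBall c R).diff isOpen_ball) hK₁
    (fun y hy => (hsmooth y hy).continuousAt.continuousWithinAt)
    (fun y hy => hsmooth y (interior_subset hy))
    (fun y hy A hA => trace_mul_hessian_barrier_neg hA hq (by positivity) _
      (hne y (interior_subset hy))) hbd hx
  rw [hw_apply] at hpos
  linarith

lemma IsSupersolution.mul_pow_mul_le (hv : IsSupersolution q v) (hq : 0 < q) (hR : ‖c‖ + R < 1)
    (hr : 0 < r) (hrρ : r ≤ ρ) (hρR : ρ ≤ R) (hM : ∀ y ∈ closedBall c r, M ≤ v y)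
    (hx : x ∈ closedBall c ρ) :
    M * r ^ (2 * q) * ((ρ ^ (2 * q))⁻¹ - (R ^ (2 * q))⁻¹) ≤ v x := by
  have hρ := hr.trans_le hrρ
  have hxρ : ‖x - c‖ ≤ ρ := by simpa [dist_eq_norm] using hx
  have hx₁ : x ∈ ball (0 : En n) 1 :=
    closedBall_subset_ball' (by rw [dist_zero_right]; linarith) hx
  have hκ : 0 ≤ (ρ ^ (2 * q))⁻¹ - (R ^ (2 * q))⁻¹ := sub_nonneg.2 (by gcongr)
  rcases le_or_gt M 0 with hM₀ | hM₀
  · exact (mul_nonpos_of_nonpos_of_nonneg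
      (mul_nonpos_of_nonpos_of_nonneg hM₀ (by positivity)) hκ).trans (hv.nonneg x hx₁)
  rcases le_or_gt ‖x - c‖ r with hxr | hxr
  · refine le_trans ?_ (hM x (by simpa [dist_eq_norm] using hxr))
    have hle : r ^ (2 * q) * ((ρ ^ (2 * q))⁻¹ - (R ^ (2 * q))⁻¹) ≤ 1 := by
      calc _ ≤ ρ ^ (2 * q) * (ρ ^ (2 * q))⁻¹ := by
            gcongr
            exact sub_le_self _ (by have := hρ.trans_le hρR; positivity)
        _ = 1 := mul_inv_cancel₀ (by positivity)
    rw [mul_assoc]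
    exact mul_le_of_le_one_right hM₀.le hle
  · have hx_annulus : x ∈ closedBall c R \ ball c r := by
      simpa [dist_eq_norm] using ⟨hxρ.trans hρR, hxr.le⟩
    refine le_trans ?_ (hv.barrier_le hq hR hr hM₀ hM hx_annulus)
    have := hr.trans hxr
    gcongr

/-- The estimate `inf_{B_r(c)} v ≤ C r^{-k}` for all small balls centred in `B_{3/5}`. -/
def BallGrowthBound {n : ℕ} (k : ℕ) (C : ℝ) (v : En n → ℝ) : Prop :=
  ∀ (c : En n) (r M : ℝ), ‖c‖ ≤ 3 / 5 → 0 < r → r ≤ 3 / 10 →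
    (∀ x ∈ closedBall c r, M ≤ v x) → M * r ^ k ≤ C

-- The origin may lie too far from `B_r(c)` for one barrier, so the bound `v 0 ≤ 1` is first
-- carried to a point near `(3 / 5) • c`.
lemma exists_ballGrowthBound (n : ℕ) (hq : 0 < q) :
    ∃ C : ℝ, ∀ v : En n → ℝ, IsSupersolution q v → v 0 ≤ 1 → BallGrowthBound (2 * q) C v := by
  have hκ {ρ R : ℝ} (hρ : 0 < ρ) (hρR : ρ < R) : 0 < (ρ ^ (2 * q))⁻¹ - (R ^ (2 * q))⁻¹ :=
    sub_pos.2 (inv_strictAnti₀ (by positivity) (pow_lt_pow_left₀ hρR hρ.le (by lia)))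
  have hκ₁ := hκ (ρ := 2 / 5) (R := 1 / 2) (by norm_num) (by norm_num)
  have hκ₂ := hκ (ρ := 3 / 10) (R := 7 / 20) (by norm_num) (by norm_num)
  set κ₁ : ℝ := ((2 / 5) ^ (2 * q))⁻¹ - ((1 / 2) ^ (2 * q))⁻¹
  set κ₂ : ℝ := ((3 / 10) ^ (2 * q))⁻¹ - ((7 / 20) ^ (2 * q))⁻¹
  set M₁ : ℝ := 2 / ((1 / 20) ^ (2 * q) * κ₁) with hM₁
  refine ⟨M₁ / κ₂, fun v hv hv₀ c r M hc hr hr' hM => ?_⟩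
  have hc' : ‖(3 / 5 : ℝ) • c‖ ≤ 9 / 25 := by
    rw [norm_smul, Real.norm_of_nonneg (by norm_num)]
    linarith
  obtain ⟨x, hx, hvx⟩ : ∃ x ∈ closedBall ((3 / 5 : ℝ) • c) (1 / 20), v x ≤ M₁ := by
    by_contra! hM₁v
    have hbarrier := hv.mul_pow_mul_le (x := 0) (ρ := 2 / 5) (R := 1 / 2) hq (by linarith)
      (by norm_num) (by norm_num) (by norm_num) (fun y hy => (hM₁v y hy).le)
      (by rw [mem_closedBall, dist_zero_left]; linarith)
    rw [mul_assoc, hM₁, div_mul_cancel₀ _ (by positivity)] at hbarrier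
    linarith
  have hxc : x ∈ closedBall c (3 / 10) := by
    have hdist : dist ((3 / 5 : ℝ) • c) c ≤ 6 / 25 := by
      rw [dist_eq_norm, show (3 / 5 : ℝ) • c - c = (-(2 / 5) : ℝ) • c by module, norm_smul,
        norm_neg, Real.norm_of_nonneg (by norm_num)]
      linarith
    rw [mem_closedBall] at hx ⊢
    linarith [dist_triangle x ((3 / 5 : ℝ) • c) c]
  rw [le_div_iff₀ hκ₂]
  exact (hv.mul_pow_mul_le hq (by linarith) hr hr' (by norm_num) hM hxc).trans hvx

end Barrier

section Paraboloids

variable {E : Type*} [NormedAddCommGroup E] {K : Set E} {v : E → ℝ} {α : ℝ} {x y z w : E}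

/-- The function `v` minus the concave paraboloid of opening `α` and vertex `y`. Its minimum points
are those where a translate of the paraboloid, slid up from below, first touches `v`. -/
def addParaboloid (v : E → ℝ) (α : ℝ) (y x : E) : ℝ :=
  v x + α / 2 * ‖x - y‖ ^ 2

/-- The points of `K` at which `v` is touched from below by a paraboloid of opening `α` with vertex
in `K`. -/
def contactSet (K : Set E) (v : E → ℝ) (α : ℝ) : Set E :=
  {z ∈ K | ∃ y ∈ K, IsMinOn (addParaboloid v α y) K z}

/-- The Moreau envelope (inf-convolution) of `v` over `K`: the height to which the paraboloid with
vertex `y` can be slid up below `v`. -/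
def moreauEnvelope (K : Set E) (v : E → ℝ) (α : ℝ) (y : E) : ℝ :=
  ⨅ x : K, addParaboloid v α y x

/-- Among the paraboloids of opening `α` with vertex in `K` that lie below `v` on `K`, the highest
one at `x` can be taken to have vertex `y`. -/
def IsEnvelopeVertex (K : Set E) (v : E → ℝ) (α : ℝ) (x y : E) : Prop :=
  y ∈ K ∧ IsMaxOn (fun y => moreauEnvelope K v α y - α / 2 * ‖x - y‖ ^ 2) K y

lemma le_addParaboloid (hα : 0 ≤ α) : v x ≤ addParaboloid v α y x :=
  le_add_of_nonneg_right (by positivity)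

lemma isClosed_contactSet (hK : IsCompact K) (hv : ContinuousOn v K) :
    IsClosed (contactSet K v α) := by
  have hKK : IsCompact (K ×ˢ K) := hK.prod hK
  have hcont : ContinuousOn (fun p : E × E => addParaboloid v α p.2 p.1) (K ×ˢ K) :=
    (hv.comp continuousOn_fst fun p hp => hp.1).add (by fun_prop)
  have himage : contactSet K v α = Prod.fst '' (K ×ˢ K ∩ ⋂ x ∈ K,
      {p ∈ K ×ˢ K | addParaboloid v α p.2 p.1 ≤ addParaboloid v α p.2 x}) := by
    ext z
    simp only [contactSet, isMinOn_iff, mem_image, mem_inter_iff, mem_iInter, mem_ofPred_eq,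
      mem_prod, Prod.exists, exists_and_right, exists_eq_right]
    grind
  rw [himage]
  refine ((hKK.inter_right (isClosed_biInter fun x _ => ?_)).image continuous_fst).isClosed
  refine hKK.isClosed.isClosed_le hcont ?_
  simp only [addParaboloid]
  fun_prop

lemma moreauEnvelope_le (hv : ∀ x ∈ K, 0 ≤ v x) (hα : 0 ≤ α) (hx : x ∈ K) :
    moreauEnvelope K v α y ≤ addParaboloid v α y x :=
  ciInf_le ⟨0, by rintro _ ⟨x, rfl⟩; exact (hv x x.2).trans (le_addParaboloid hα)⟩ (⟨x, hx⟩ : K)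

lemma moreauEnvelope_nonneg (hv : ∀ x ∈ K, 0 ≤ v x) (hα : 0 ≤ α) : 0 ≤ moreauEnvelope K v α y :=
  Real.iInf_nonneg fun x => (hv x x.2).trans (le_addParaboloid hα)

lemma upperSemicontinuous_moreauEnvelope (hv : ∀ x ∈ K, 0 ≤ v x) (hα : 0 ≤ α) :
    UpperSemicontinuous (moreauEnvelope K v α) := by
  refine upperSemicontinuous_ciInf
    (fun y => ⟨0, by rintro _ ⟨x, rfl⟩; exact (hv x x.2).trans (le_addParaboloid hα)⟩) fun x => ?_
  refine Continuous.upperSemicontinuous ?_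
  simp only [addParaboloid]
  fun_prop

lemma exists_isEnvelopeVertex (hK : IsCompact K) (hK' : K.Nonempty) (hv : ∀ x ∈ K, 0 ≤ v x)
    (hα : 0 ≤ α) (x : E) : ∃ y, IsEnvelopeVertex K v α x y := by
  have husc : UpperSemicontinuous fun y => moreauEnvelope K v α y + -(α / 2 * ‖x - y‖ ^ 2) :=
    (upperSemicontinuous_moreauEnvelope hv hα).add (Continuous.upperSemicontinuous (by fun_prop))
  simpa only [IsEnvelopeVertex, sub_eq_add_neg] using
    (husc.upperSemicontinuousOn K).exists_isMaxOn hK' hK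

lemma isEnvelopeVertex_of_isMinOn (hv : ∀ x ∈ K, 0 ≤ v x) (hα : 0 ≤ α) (hz : z ∈ K) (hy : y ∈ K)
    (hmin : IsMinOn (addParaboloid v α y) K z) : IsEnvelopeVertex K v α z y := by
  refine ⟨hy, fun y' _ => ?_⟩
  have : Nonempty K := ⟨⟨z, hz⟩⟩
  have hle : addParaboloid v α y z ≤ moreauEnvelope K v α y := le_ciInf fun x => hmin x.2
  have hge : moreauEnvelope K v α y' ≤ addParaboloid v α y' z := moreauEnvelope_le hv hα hz
  simp only [addParaboloid, mem_ofPred_eq] at hle hge ⊢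
  linarith

lemma IsEnvelopeVertex.le_addParaboloid (h : IsEnvelopeVertex K v α x y)
    (hv : ∀ x ∈ K, 0 ≤ v x) (hα : 0 ≤ α) (hx : x ∈ K) (hw : w ∈ K) :
    α / 2 * ‖x - y‖ ^ 2 ≤ addParaboloid v α y w := by
  have hmax := h.2 hx
  simp only [mem_ofPred_eq, sub_self, norm_zero] at hmax
  linarith [moreauEnvelope_nonneg (y := x) hv hα, moreauEnvelope_le (y := y) hv hα hw]

end Paraboloids

section VertexMonotonicity

open scoped InnerProductSpace

variable {E : Type*} [NormedAddCommGroup E] [InnerProductSpace ℝ E] {K : Set E} {v : E → ℝ}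
  {α : ℝ} {x x' y y' z : E}

lemma IsEnvelopeVertex.inner_sub_nonneg (h : IsEnvelopeVertex K v α x y)
    (h' : IsEnvelopeVertex K v α x' y') (hα : 0 < α) : 0 ≤ ⟪x - x', y - y'⟫_ℝ := by
  have hmax := h.2 h'.1
  have hmax' := h'.2 h.1
  simp only [mem_ofPred_eq, norm_sub_sq_real] at hmax hmax'
  refine nonneg_of_mul_nonneg_right (a := α) ?_ hα
  simp only [inner_sub_left, inner_sub_right]
  linarith

lemma IsEnvelopeVertex.dist_le_two_mul_dist_midpoint (h : IsEnvelopeVertex K v α x y)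
    (h' : IsEnvelopeVertex K v α x' y') (hα : 0 < α) :
    dist x x' ≤ 2 * dist (midpoint ℝ x y) (midpoint ℝ x' y') := by
  have hinner := h.inner_sub_nonneg h' hα
  have hmid : midpoint ℝ x y - midpoint ℝ x' y' = (1 / 2 : ℝ) • ((x - x') + (y - y')) := by
    simp only [midpoint_eq_smul_add, invOf_eq_inv]
    module
  have hle : ‖x - x'‖ ≤ ‖(x - x') + (y - y')‖ := by
    refine le_of_sq_le_sq ?_ (norm_nonneg _)
    rw [norm_add_sq_real]
    linarith [sq_nonneg ‖y - y'‖]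
  rw [dist_eq_norm, dist_eq_norm, hmid, norm_smul, Real.norm_of_nonneg (by norm_num)]
  linarith

lemma isMinOn_addParaboloid_midpoint (hα : 0 ≤ α) (hmin : IsMinOn (addParaboloid v α y) K z) :
    IsMinOn (addParaboloid v (2 * α) (midpoint ℝ z y)) K z := by
  intro x hx
  have hxy := hmin hx
  have hx_mid :=
    EuclideanGeometry.dist_sq_add_dist_sq_eq_two_mul_dist_midpoint_sq_add_half_dist_sq x z y
  have hsq : 0 ≤ α * ‖x - z‖ ^ 2 := by positivity
  have hz_mid : ‖z - midpoint ℝ z y‖ = ‖z - y‖ / 2 := by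
    rw [← dist_eq_norm, dist_left_midpoint, dist_eq_norm, Real.norm_ofNat]
    ring
  simp only [dist_eq_norm] at hx_mid
  simp only [addParaboloid, mem_ofPred_eq, hz_mid] at hxy ⊢
  linear_combination hxy + hsq / 2 + α / 2 * hx_mid

lemma contactSet_subset_contactSet_two_mul (hK : Convex ℝ K) (hα : 0 ≤ α) :
    contactSet K v α ⊆ contactSet K v (2 * α) := fun z ⟨hz, y, hy, hmin⟩ =>
  ⟨hz, midpoint ℝ z y, hK.midpoint_mem hz hy, isMinOn_addParaboloid_midpoint hα hmin⟩

end VertexMonotonicity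

section Antilipschitz

variable {E : Type*} [NormedAddCommGroup E] [NormedSpace ℝ E] [FiniteDimensional ℝ E]
  [MeasurableSpace E] [BorelSpace E]

lemma addHaar_le_pow_finrank_mul_addHaar_image (μ : Measure E) [μ.IsAddHaarMeasure] {K : ℝ≥0}
    {T : E → E} (hT : AntilipschitzWith K T) (U : Set E) :
    μ U ≤ (K : ℝ≥0∞) ^ Module.finrank ℝ E * μ (T '' U) := by
  rw [Measure.isAddLeftInvariant_eq_smul μ (Measure.hausdorffMeasure (Module.finrank ℝ E : ℝ)),
    Measure.smul_apply, Measure.smul_apply, mul_smul_comm]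
  gcongr
  simpa using hT.le_hausdorffMeasure_image (Nat.cast_nonneg (Module.finrank ℝ E)) U

end Antilipschitz

section VertexMap

section Gradient

variable {E : Type*} [NormedAddCommGroup E] [InnerProductSpace ℝ E] [CompleteSpace E]

/-- The map sending a point at which a paraboloid of opening `b` touches `v` from below to the
vertex of that paraboloid. -/
def vertexMap (v : E → ℝ) (b : ℝ) (z : E) : E :=
  z + b⁻¹ • gradient v z

lemma eq_vertexMap_of_isLocalMin {v : E → ℝ} {b : ℝ} {y z : E} (hb : b ≠ 0)
    (hv : DifferentiableAt ℝ v z) (hmin : IsLocalMin (addParaboloid v b y) z) :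
    y = vertexMap v b z := by
  have hderiv : HasFDerivAt (addParaboloid v b y) _ z :=
    hv.hasFDerivAt.add ((hasFDerivAt_norm_sub_sq y z).const_mul (b / 2))
  have hzero := hmin.hasFDerivAt_eq_zero hderiv
  have hgrad : gradient v z = b • (y - z) := by
    refine ext_inner_right ℝ fun w => ?_
    have hw := DFunLike.congr_fun hzero w
    simp only [add_apply, smul_apply, innerSL_apply_apply, zero_apply, smul_eq_mul, nsmul_eq_mul,
      Nat.cast_ofNat, inner_sub_left] at hw
    rw [inner_gradient_left, inner_smul_left, inner_sub_left, conj_trivial]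
    linarith
  rw [vertexMap, hgrad, inv_smul_smul₀ hb, add_sub_cancel]

end Gradient

variable {n q : ℕ} {v : En n → ℝ} {b : ℝ} {y z : En n}

lemma hasFDerivAt_vertexMap (hv : ContDiffAt ℝ 2 v z) (b : ℝ) :
    HasFDerivAt (vertexMap v b) (Matrix.toEuclideanCLM (𝕜 := ℝ) (1 + b⁻¹ • hessian v z)) z := by
  have hfderiv : HasFDerivAt (fderiv ℝ v) (fderiv ℝ (fderiv ℝ v) z) z :=
    ((hv.fderiv_right (m := 1) le_rfl).differentiableAt one_ne_zero).hasFDerivAt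
  rw [← hasFDerivWithinAt_univ, hasFDerivWithinAt_euclidean]
  intro i
  rw [hasFDerivWithinAt_univ]
  have hcoord (x : En n) : vertexMap v b x i =
      x i + b⁻¹ • fderiv ℝ v x (EuclideanSpace.single i 1) := by
    simp [vertexMap, ← inner_gradient_left, EuclideanSpace.inner_single_right]
  have hpartial : HasFDerivAt (fun x : En n => x i + b⁻¹ • fderiv ℝ v x (EuclideanSpace.single i 1))
      _ z :=
    (EuclideanSpace.proj (𝕜 := ℝ) i).hasFDerivAt.add
      ((hfderiv.clm_apply (hasFDerivAt_const _ z)).const_smul b⁻¹)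
  simp only [hcoord]
  refine hpartial.congr_fderiv (ContinuousLinearMap.ext fun ξ => ?_)
  have hsymm := hv.isSymmSndFDerivAt (by simp) ξ (EuclideanSpace.single i 1)
  rw [← dotProduct_hessian_mulVec hv (EuclideanSpace.single i 1) ξ] at hsymm
  simp [hsymm]

lemma hessian_paraboloid (b : ℝ) (y z : En n) :
    hessian (fun x => b / 2 * ‖x - y‖ ^ 2) z = b • (1 : Matrix (Fin n) (Fin n) ℝ) := by
  rw [hessian_comp_norm_sub_sq (h := fun s => b / 2 * s) (by fun_prop)]
  have hderiv : deriv (fun s : ℝ => b / 2 * s) = fun _ => b / 2 := by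
    funext s
    simp
  simp [hderiv, mul_div_cancel₀]

lemma contDiff_paraboloid (b : ℝ) (y : En n) :
    ContDiff ℝ 2 fun x : En n => b / 2 * ‖x - y‖ ^ 2 :=
  contDiff_const.mul ((contDiff_id.sub contDiff_const).norm_sq ℝ)

lemma hessian_addParaboloid (hv : ContDiffAt ℝ 2 v z) (b : ℝ) (y : En n) :
    hessian (addParaboloid v b y) z = hessian v z + b • (1 : Matrix (Fin n) (Fin n) ℝ) := by
  rw [← hessian_paraboloid b y z]
  exact hessian_add hv (contDiff_paraboloid b y).contDiffAt

namespace IsSupersolution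

lemma abs_det_vertexMap_le (hv : IsSupersolution q v) (hb : 0 < b) (hz : z ∈ ball 0 1)
    (hmin : IsLocalMin (addParaboloid v b y) z) :
    |(1 + b⁻¹ • hessian v z).det| ≤ q ^ n := by
  have hparab := (contDiff_paraboloid b y).contDiffAt (x := z)
  have hv₂ := hv.contDiffAt hz
  obtain ⟨A, hA, htrace⟩ := hv.exists_trace_hessian_le hz hparab hmin
  have hpsd : (hessian (addParaboloid v b y) z).PosSemidef :=
    hessian_posSemidef_of_isLocalMin (hv₂.add hparab) hmin
  have hP : 1 + b⁻¹ • hessian v z = b⁻¹ • hessian (addParaboloid v b y) z := by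
    rw [hessian_addParaboloid hv₂, smul_add, inv_smul_smul₀ hb.ne', add_comm]
  have htrace_le : (hessian (addParaboloid v b y) z).trace ≤ b * q := by
    refine htrace.trans ?_
    rw [hessian_paraboloid, Matrix.mul_smul, mul_one, Matrix.trace_smul, smul_eq_mul]
    exact mul_le_mul_of_nonneg_left hA.trace_le hb.le
  have hpsd' := hpsd.smul (inv_nonneg.2 hb.le)
  rw [hP, abs_of_nonneg hpsd'.det_nonneg]
  refine (det_le_trace_pow_card hpsd').trans ?_
  rw [Fintype.card_fin]
  refine pow_le_pow_left₀ hpsd'.trace_nonneg ?_ n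
  rw [Matrix.trace_smul, smul_eq_mul, inv_mul_le_iff₀ hb]
  exact htrace_le

lemma volume_vertexMap_image_le (hv : IsSupersolution q v) (hb : 0 < b) {s : Set (En n)}
    (hs : MeasurableSet s) (hs₁ : s ⊆ ball 0 1)
    (hmin : ∀ z ∈ s, ∃ y, IsLocalMin (addParaboloid v b y) z) :
    volume (vertexMap v b '' s) ≤ q ^ n * volume s := by
  refine (addHaar_image_le_lintegral_abs_det_fderiv volume hs fun z hz =>
    (hasFDerivAt_vertexMap (hv.contDiffAt (hs₁ hz)) b).hasFDerivWithinAt).trans ?_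
  rw [← setLIntegral_const]
  refine setLIntegral_mono' hs fun z hz => ?_
  obtain ⟨y, hy⟩ := hmin z hz
  have hdet : (Matrix.toEuclideanCLM (𝕜 := ℝ) (1 + b⁻¹ • hessian v z)).det =
      (1 + b⁻¹ • hessian v z).det := by
    rw [ContinuousLinearMap.det, Matrix.coe_toEuclideanCLM_eq_toEuclideanLin,
      Matrix.toEuclideanLin_eq_toLin_orthonormal, LinearMap.det_toLin]
  rw [hdet]
  refine ENNReal.ofReal_le_of_le_toReal ?_
  simpa using hv.abs_det_vertexMap_le hb (hs₁ hz) hy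

end IsSupersolution

end VertexMap

section ContactEstimate

variable {n q k : ℕ} {v : En n → ℝ} {C α β d r s : ℝ} {c x y z : En n}

/-- The compact ball in which the vertices of the sliding paraboloids range. -/
abbrev vertexBall (n : ℕ) : Set (En n) := closedBall 0 (9 / 10)

lemma vertexBall_subset_ball : vertexBall n ⊆ ball 0 1 :=
  closedBall_subset_ball (by norm_num)

-- Otherwise `v ≥ β r²` on `closedBall c r`, which the growth bound forbids.
lemma BallGrowthBound.lt_norm_sub_add (hB : BallGrowthBound k C v) (hβ : 0 < β) (hr : 0 < r)
    (hr' : r ≤ 3 / 10) (hC : C < β * r ^ (k + 2)) (hc : ‖c‖ ≤ 3 / 5)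
    (hd : ∀ w ∈ vertexBall n, β / 2 * d ^ 2 ≤ addParaboloid v β y w) : d < ‖c - y‖ + 2 * r := by
  by_contra! hfar
  have hlower : ∀ w ∈ closedBall c r, β * r ^ 2 ≤ v w := fun w hw => by
    have hwc : ‖w - c‖ ≤ r := by simpa [dist_eq_norm] using hw
    have hwy : ‖w - y‖ ≤ d - r := by linarith [norm_sub_le_norm_sub_add_norm_sub w c y]
    have hwv := hd w (closedBall_subset_closedBall' (by rw [dist_zero_right]; linarith) hw)
    have hgap : 2 * r ^ 2 ≤ d ^ 2 - ‖w - y‖ ^ 2 := by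
      nlinarith [norm_nonneg (w - y), norm_nonneg (c - y)]
    have hgap' : β / 2 * (2 * r ^ 2) ≤ β / 2 * (d ^ 2 - ‖w - y‖ ^ 2) := by gcongr
    rw [addParaboloid] at hwv
    linarith
  have hgrowth := hB c r (β * r ^ 2) hc hr hr' hlower
  rw [mul_assoc, ← pow_add, add_comm 2 k] at hgrowth
  exact hgrowth.not_gt hC

lemma BallGrowthBound.norm_sub_lt_of_isEnvelopeVertex (hB : BallGrowthBound k C v)
    (hv : ∀ x ∈ vertexBall n, 0 ≤ v x) (hα : 0 < α) (hr : 0 < r) (hC : C < α * r ^ (k + 2))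
    (hx : ‖x‖ + 2 * r ≤ 3 / 5) (hy : IsEnvelopeVertex (vertexBall n) v α x y) :
    ‖x - y‖ < 2 * r := by
  by_contra! hfar
  have hd : 0 < ‖x - y‖ := by linarith
  have hx' := norm_nonneg x
  have hxK : x ∈ vertexBall n := by simpa using by linarith
  set c := x + (2 * r / ‖x - y‖) • (y - x) with hc
  have hc_norm : ‖c‖ ≤ 3 / 5 := by
    refine (norm_add_le _ _).trans ?_
    rwa [norm_smul, norm_sub_rev y, Real.norm_of_nonneg (by positivity), div_mul_cancel₀ _ hd.ne']
  have hcy : ‖c - y‖ = ‖x - y‖ - 2 * r := by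
    have hsmul : c - y = (1 - 2 * r / ‖x - y‖) • (x - y) := by
      rw [hc]
      module
    rw [hsmul, norm_smul, Real.norm_of_nonneg (sub_nonneg.2 (div_le_one_of_le₀ hfar hd.le)),
      sub_mul, one_mul, div_mul_cancel₀ _ hd.ne']
  have hlt := hB.lt_norm_sub_add hα hr (by linarith) hC hc_norm
    fun w hw => hy.le_addParaboloid hv hα.le hxK hw
  linarith

lemma BallGrowthBound.norm_sub_lt_of_isMinOn (hB : BallGrowthBound k C v)
    (hv : ∀ x ∈ vertexBall n, 0 ≤ v x) (hβ : 0 < β) (hr : 0 < r) (hr' : r ≤ 3 / 10)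
    (hC : C < β * r ^ (k + 2)) (hy : ‖y‖ ≤ 3 / 5) (hz : z ∈ vertexBall n)
    (hmin : IsMinOn (addParaboloid v β y) (vertexBall n) z) : ‖z - y‖ < 2 * r := by
  simpa using hB.lt_norm_sub_add hβ hr hr' hC hy fun w hw =>
    (le_add_of_nonneg_left (hv z hz)).trans (hmin hw)

-- If `z` were a contact point of opening `α`, with vertex `y'`, then `midpoint z y'` would be a
-- vertex of opening `2 * α` for `z`, hence equal to `midpoint x y`, and monotonicity of the
-- vertices would give `x = z`.
lemma IsSupersolution.exists_mem_contactSet_vertexMap_eq_midpoint (hv : IsSupersolution q v)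
    (hB : BallGrowthBound k C v) (hα : 0 < α) (hr : 0 < r) (hsr : s + 3 * r ≤ 3 / 5)
    (hC : C < α * r ^ (k + 2)) (hx : x ∈ ball 0 s \ contactSet (vertexBall n) v α)
    (hy : IsEnvelopeVertex (vertexBall n) v α x y) :
    ∃ z ∈ (contactSet (vertexBall n) v (2 * α) \ contactSet (vertexBall n) v α) ∩
      ball 0 (s + 3 * r), vertexMap v (2 * α) z = midpoint ℝ x y := by
  have hnonneg : ∀ x ∈ vertexBall n, 0 ≤ v x := fun x hx => hv.nonneg x (vertexBall_subset_ball hx)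
  have hcont := hv.contDiffOn.continuousOn.mono (vertexBall_subset_ball (n := n))
  have hxs : ‖x‖ < s := by simpa using hx.1
  have hx₀ := norm_nonneg x
  have hxK : x ∈ vertexBall n := by simpa using by linarith
  set p := midpoint ℝ x y
  have hpK : p ∈ vertexBall n := (convex_closedBall 0 (9 / 10)).midpoint_mem hxK hy.1
  have hpx : ‖p - x‖ < r := by
    have hxy := hB.norm_sub_lt_of_isEnvelopeVertex hnonneg hα hr hC (by linarith) hy
    rw [← dist_eq_norm, dist_midpoint_left, dist_eq_norm, Real.norm_ofNat]
    linarith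
  have hp : ‖p‖ ≤ s + r := by linarith [norm_le_norm_add_norm_sub' p x]
  obtain ⟨z, hzK, hz⟩ := (isCompact_closedBall (0 : En n) (9 / 10)).exists_isMinOn ⟨x, hxK⟩
    (f := addParaboloid v (2 * α) p) (hcont.add (by fun_prop))
  have hC' : C < 2 * α * r ^ (k + 2) := hC.trans (by gcongr; linarith)
  have hzp := hB.norm_sub_lt_of_isMinOn hnonneg (by positivity) hr (by linarith) hC' (by linarith)
    hzK hz
  have hzs : ‖z‖ < s + 3 * r := by linarith [norm_le_norm_add_norm_sub' z p]
  have hvertex {p' : En n} (hmin : IsMinOn (addParaboloid v (2 * α) p') (vertexBall n) z) :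
      p' = vertexMap v (2 * α) z :=
    eq_vertexMap_of_isLocalMin (by positivity)
      ((hv.contDiffAt (vertexBall_subset_ball hzK)).differentiableAt two_ne_zero)
      (hmin.isLocalMin (closedBall_mem_nhds_of_mem (by simpa using by linarith)))
  refine ⟨z, ⟨⟨⟨hzK, p, hpK, hz⟩, ?_⟩, by simpa using hzs⟩, (hvertex hz).symm⟩
  rintro ⟨_, y', hy', hz'⟩
  have hmid := hvertex (isMinOn_addParaboloid_midpoint hα.le hz')
  have hdist := hy.dist_le_two_mul_dist_midpoint
    (isEnvelopeVertex_of_isMinOn hnonneg hα.le hzK hy' hz') hα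
  rw [hmid, ← hvertex hz, dist_self, mul_zero, dist_le_zero] at hdist
  exact hx.2 (hdist ▸ ⟨hzK, y', hy', hz'⟩)

lemma IsSupersolution.measurableSet_contactSet (hv : IsSupersolution q v) (α : ℝ) :
    MeasurableSet (contactSet (vertexBall n) v α) :=
  (isClosed_contactSet (isCompact_closedBall 0 (9 / 10))
    (hv.contDiffOn.continuousOn.mono vertexBall_subset_ball)).measurableSet

lemma IsSupersolution.volume_ball_diff_contactSet_le (hv : IsSupersolution q v)
    (hB : BallGrowthBound k C v) (hα : 0 < α) (hr : 0 < r) (hsr : s + 3 * r ≤ 3 / 5)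
    (hC : C < α * r ^ (k + 2)) :
    volume (ball 0 s \ contactSet (vertexBall n) v α) ≤
      (2 * q) ^ n * volume ((contactSet (vertexBall n) v (2 * α) \ contactSet (vertexBall n) v α) ∩
        ball 0 (s + 3 * r)) := by
  set F := ball 0 s \ contactSet (vertexBall n) v α
  set G := (contactSet (vertexBall n) v (2 * α) \ contactSet (vertexBall n) v α) ∩
    ball 0 (s + 3 * r)
  have hnonneg : ∀ x ∈ vertexBall n, 0 ≤ v x := fun x hx => hv.nonneg x (vertexBall_subset_ball hx)
  choose Y hY using exists_isEnvelopeVertex (isCompact_closedBall (0 : En n) (9 / 10))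
    ⟨0, mem_closedBall_self (by norm_num)⟩ hnonneg hα.le
  have hanti : AntilipschitzWith 2 fun x => midpoint ℝ x (Y x) :=
    AntilipschitzWith.of_le_mul_dist fun x x' => (hY x).dist_le_two_mul_dist_midpoint (hY x') hα
  have hcover : (fun x => midpoint ℝ x (Y x)) '' F ⊆ vertexMap v (2 * α) '' G := by
    rintro _ ⟨x, hx, rfl⟩
    exact hv.exists_mem_contactSet_vertexMap_eq_midpoint hB hα hr hsr hC hx (hY x)
  have hG : MeasurableSet G :=
    ((hv.measurableSet_contactSet _).diff (hv.measurableSet_contactSet _)).inter measurableSet_ball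
  have hvertex : volume (vertexMap v (2 * α) '' G) ≤ q ^ n * volume G := by
    refine hv.volume_vertexMap_image_le (by positivity) hG
      (fun z hz => vertexBall_subset_ball hz.1.1.1) fun z ⟨⟨⟨_, y, _, hy⟩, _⟩, hz⟩ =>
        ⟨y, hy.isLocalMin (closedBall_mem_nhds_of_mem ?_)⟩
    exact ball_subset_ball (by linarith) hz
  calc volume F ≤ 2 ^ n * volume ((fun x => midpoint ℝ x (Y x)) '' F) := by
        simpa using addHaar_le_pow_finrank_mul_addHaar_image volume hanti F
    _ ≤ 2 ^ n * (q ^ n * volume G) := by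
        gcongr
        exact (measure_mono hcover).trans hvertex
    _ = (2 * q) ^ n * volume G := by rw [← mul_assoc, mul_pow]

lemma measure_le_div_add_one_mul {X : Type*} [MeasurableSpace X] {μ : Measure X} {A : ℝ≥0}
    {F G H : Set X} (hF : F ⊆ H) (hG : G ⊆ H) (hFG : Disjoint F G) (hGm : MeasurableSet G)
    (hle : μ F ≤ A * μ G) : μ F ≤ (A / (A + 1) : ℝ≥0) * μ H := by
  have hsum : μ F * (A + 1) ≤ A * μ H := by
    calc μ F * (A + 1) = A * μ F + μ F := by ring
      _ ≤ A * μ F + A * μ G := by gcongr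
      _ = A * μ (F ∪ G) := by rw [measure_union hFG hGm, mul_add]
      _ ≤ A * μ H := by
          gcongr
          exact union_subset hF hG
  rw [ENNReal.coe_div (by positivity), ENNReal.mul_comm_div, ← mul_div_assoc,
    ENNReal.le_div_iff_mul_le (by simp) (by simp)]
  exact_mod_cast hsum

lemma IsSupersolution.volume_ball_diff_contactSet_two_mul_le (hv : IsSupersolution q v)
    (hB : BallGrowthBound k C v) (hα : 0 < α) (hr : 0 < r) (hsr : s + 3 * r ≤ 3 / 5)
    (hC : C < α * r ^ (k + 2)) :
    volume (ball 0 s \ contactSet (vertexBall n) v (2 * α)) ≤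
      ((2 * q) ^ n / ((2 * q) ^ n + 1) : ℝ≥0) *
        volume (ball 0 (s + 3 * r) \ contactSet (vertexBall n) v α) := by
  have hmono : contactSet (vertexBall n) v α ⊆ contactSet (vertexBall n) v (2 * α) :=
    contactSet_subset_contactSet_two_mul (convex_closedBall 0 (9 / 10)) hα.le
  have hball : ball (0 : En n) s ⊆ ball 0 (s + 3 * r) := ball_subset_ball (by linarith)
  refine measure_le_div_add_one_mul (sdiff_subset_sdiff hball hmono)
    (fun z hz => ⟨hz.2, hz.1.2⟩)
    (disjoint_left.2 fun z hz hz' => hz.2 hz'.1.1)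
    (((hv.measurableSet_contactSet _).diff (hv.measurableSet_contactSet _)).inter
      measurableSet_ball) ?_
  refine (measure_mono (sdiff_subset_sdiff_right hmono)).trans ?_
  exact_mod_cast hv.volume_ball_diff_contactSet_le hB hα hr hsr hC

end ContactEstimate

section Decay

variable {n q : ℕ} {v : En n → ℝ}

lemma le_of_mem_contactSet {α : ℝ} {z : En n} (hv₀ : v 0 ≤ 1) (hα : 2 ≤ α)
    (hz : z ∈ contactSet (vertexBall n) v α) : v z ≤ α := by
  obtain ⟨-, y, hy, hmin⟩ := hz
  have hy' : ‖0 - y‖ ^ 2 ≤ (9 / 10) ^ 2 := by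
    rw [zero_sub, norm_neg]
    gcongr
    simpa using hy
  calc v z ≤ addParaboloid v α y z := le_addParaboloid (by linarith)
    _ ≤ addParaboloid v α y 0 := hmin (mem_closedBall_self (by norm_num))
    _ ≤ 1 + α / 2 * (9 / 10) ^ 2 := by
        rw [addParaboloid]
        gcongr
    _ ≤ α := by linarith

-- The margins `r k` decay geometrically, slowly enough that `2 ^ k * r k ^ N` does not decay.
lemma exists_shrinking_radii {N : ℕ} (hN : N ≠ 0) (C : ℝ) :
    ∃ (a₀ : ℝ) (r s : ℕ → ℝ), 2 ≤ a₀ ∧ (∀ k, 0 < r k) ∧ (∀ k, s (k + 1) + 3 * r k = s k) ∧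
      (∀ k, s k ∈ Icc (1 / 2) (3 / 5)) ∧ ∀ k, C < a₀ * 2 ^ k * r k ^ N := by
  obtain ⟨θ, hθ₀, hθ₁, hθ⟩ : ∃ θ : ℝ, 0 < θ ∧ θ < 1 ∧ θ ^ N = 1 / 2 :=
    ⟨(1 / 2) ^ (N : ℝ)⁻¹, by positivity,
      Real.rpow_lt_one (by norm_num) (by norm_num) (by positivity),
      Real.rpow_inv_natCast_pow (by norm_num) hN⟩
  set η := (1 - θ) / 30 with hη
  have hη₀ : 0 < η := by linarith
  obtain ⟨a₀, ha₀⟩ := exists_gt (max 2 (C / η ^ N))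
  rw [max_lt_iff, div_lt_iff₀ (pow_pos hη₀ N)] at ha₀
  refine ⟨a₀, fun k => η * θ ^ k, fun k => 1 / 2 + θ ^ k / 10, ha₀.1.le, fun k => by positivity,
    fun k => by simp only [hη]; ring, fun k => ⟨?_, ?_⟩, fun k => ?_⟩
  · linarith [pow_pos hθ₀ k]
  · linarith [pow_le_one₀ (n := k) hθ₀.le hθ₁.le]
  · have hcancel : (2 : ℝ) ^ k * (θ ^ k) ^ N = 1 := by
      rw [pow_right_comm, hθ, ← mul_pow]
      norm_num
    calc C < a₀ * η ^ N * (2 ^ k * (θ ^ k) ^ N) := by rw [hcancel, mul_one]; exact ha₀.2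
      _ = a₀ * 2 ^ k * (η * θ ^ k) ^ N := by rw [mul_pow]; ring

lemma exists_forall_volume_lt_le_pow_mul (n : ℕ) (hq : 0 < q) :
    ∃ (τ : ℝ≥0) (a₀ : ℝ), 0 < τ ∧ τ < 1 ∧ 0 < a₀ ∧
      ∀ v : En n → ℝ, IsSupersolution q v → v 0 ≤ 1 → ∀ k : ℕ,
        volume {x ∈ ball (0 : En n) (1 / 2) | a₀ * 2 ^ k < v x} ≤
          τ ^ k * volume (ball (0 : En n) 1) := by
  obtain ⟨C, hC⟩ := exists_ballGrowthBound n hq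
  obtain ⟨a₀, r, s, ha₀, hr, hrs, hs, hCr⟩ :=
    exists_shrinking_radii (N := 2 * q + 2) (by lia) C
  have hle (k : ℕ) : 2 ≤ a₀ * 2 ^ k :=
    ha₀.trans (le_mul_of_one_le_right (by linarith) (one_le_pow₀ one_le_two))
  set τ : ℝ≥0 := (2 * q) ^ n / ((2 * q) ^ n + 1)
  refine ⟨τ, a₀, by positivity, (div_lt_one (by positivity)).2 (lt_add_one _), by linarith,
    fun v hv hv₀ k => ?_⟩
  have hdecay : volume (ball 0 (s k) \ contactSet (vertexBall n) v (a₀ * 2 ^ k)) ≤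
      τ ^ k * volume (ball (0 : En n) 1) := by
    induction k with
    | zero =>
      rw [pow_zero (τ : ℝ≥0∞), one_mul]
      exact measure_mono (sdiff_subset.trans (ball_subset_ball (by linarith [(hs 0).2])))
    | succ k ih =>
      have hstep := hv.volume_ball_diff_contactSet_two_mul_le (hC v hv hv₀) (s := s (k + 1))
        (by linarith [hle k]) (hr k) ((hrs k).trans_le (hs k).2) (hCr k)
      rw [hrs, ← mul_assoc, mul_comm 2 a₀, mul_assoc, ← pow_succ'] at hstep
      calc _ ≤ τ * volume (ball 0 (s k) \ contactSet (vertexBall n) v (a₀ * 2 ^ k)) := hstep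
        _ ≤ τ * (τ ^ k * volume (ball (0 : En n) 1)) := by gcongr
        _ = τ ^ (k + 1) * volume (ball (0 : En n) 1) := by rw [pow_succ', mul_assoc]
  refine le_trans (measure_mono ?_) hdecay
  exact fun x hx => ⟨ball_subset_ball (hs k).1 hx.1, fun hcontact =>
    hx.2.not_ge (le_of_mem_contactSet hv₀ (hle k) hcontact)⟩

lemma measure_lt_le_rpow_mul {X : Type*} [MeasurableSpace X] {μ : Measure X} {S : Set X}
    {f : X → ℝ} {V : ℝ≥0∞} {τ : ℝ≥0} {a t : ℝ} (hτ₀ : 0 < τ) (hτ₁ : τ < 1) (ha : 0 < a)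
    (ht : 0 < t) (hS : μ S ≤ V) (h : ∀ k : ℕ, μ {x ∈ S | a * 2 ^ k < f x} ≤ τ ^ k * V) :
    μ {x ∈ S | t < f x} ≤ ENNReal.ofReal ((t / (2 * a)) ^ Real.logb 2 τ) * V := by
  have hlog : Real.logb 2 τ < 0 := Real.logb_neg one_lt_two hτ₀ hτ₁
  rcases lt_or_ge t a with hta | hat
  · have hone : 1 ≤ (t / (2 * a)) ^ Real.logb 2 τ :=
      Real.one_le_rpow_of_pos_of_le_one_of_nonpos (by positivity)
        ((div_le_one (by positivity)).2 (by linarith)) hlog.le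
    exact (measure_mono (sep_subset _ _)).trans
      (hS.trans (le_mul_of_one_le_left' (ENNReal.one_le_ofReal.2 hone)))
  · obtain ⟨k, hk, hk'⟩ := exists_nat_pow_near ((one_le_div ha).2 hat) one_lt_two
    rw [le_div_iff₀ ha] at hk
    rw [div_lt_iff₀ ha, pow_succ] at hk'
    have hpow : (τ : ℝ) ^ k ≤ (t / (2 * a)) ^ Real.logb 2 τ :=
      calc (τ : ℝ) ^ k = ((2 : ℝ) ^ k) ^ Real.logb 2 τ := by
            rw [← Real.rpow_pow_comm two_pos.le,
              Real.rpow_logb two_pos (by norm_num) (NNReal.coe_pos.2 hτ₀)]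
        _ ≤ (t / (2 * a)) ^ Real.logb 2 τ :=
            Real.rpow_le_rpow_of_nonpos (by positivity)
              ((div_le_iff₀ (by positivity)).2 (by linarith)) hlog.le
    calc μ {x ∈ S | t < f x} ≤ μ {x ∈ S | a * 2 ^ k < f x} :=
          measure_mono fun x hx => ⟨hx.1, by linarith [hx.2]⟩
      _ ≤ τ ^ k * V := h k
      _ ≤ ENNReal.ofReal ((t / (2 * a)) ^ Real.logb 2 τ) * V := by
          gcongr
          rw [← ENNReal.coe_pow, ← ENNReal.ofReal_coe_nnreal]
          exact ENNReal.ofReal_le_ofReal (by exact_mod_cast hpow)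

end Decay

theorem krylov_safonov_weak_harnack_general (n : ℕ) {lam : ℝ} (Lam : ℝ) (hlam : 0 < lam) :
    ∃ ε C : ℝ, 0 < ε ∧ 0 < C ∧
      ∀ (a : Fin n → Fin n → En n → ℝ) (v : En n → ℝ),
        (∀ x ∈ ball (0 : En n) 1, ∀ ξ : En n,
          lam * ∑ i, ξ i ^ 2 ≤ ∑ i, ∑ j, a i j x * ξ i * ξ j ∧
          ∑ i, ∑ j, a i j x * ξ i * ξ j ≤ Lam * ∑ i, ξ i ^ 2) →
        ContDiffOn ℝ 2 v (ball (0 : En n) 1) →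
        (∀ x ∈ ball (0 : En n) 1, 0 ≤ v x) →
        (∀ x ∈ ball (0 : En n) 1, ∑ i, ∑ j, a i j x * pd2 v i j x ≤ 0) →
        v 0 ≤ 1 →
        ∀ t : ℝ, 0 < t →
          volume {x ∈ ball (0 : En n) (1 / 2) | t < v x} ≤ ENNReal.ofReal (C * t ^ (-ε)) := by
  obtain ⟨q, hq⟩ := exists_nat_gt (max 0 (n * Lam / lam))
  rw [max_lt_iff, Nat.cast_pos, div_lt_iff₀ hlam] at hq
  obtain ⟨τ, a₀, hτ₀, hτ₁, ha₀, hdecay⟩ := exists_forall_volume_lt_le_pow_mul n hq.1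
  set V := volume (ball (0 : En n) 1)
  have hV : 0 < V.toReal :=
    ENNReal.toReal_pos (measure_ball_pos _ _ one_pos).ne' measure_ball_lt_top.ne
  refine ⟨-Real.logb 2 τ, (2 * a₀) ^ (-Real.logb 2 τ) * V.toReal,
    neg_pos.2 (Real.logb_neg one_lt_two hτ₀ hτ₁), by positivity,
    fun a v ha hv hnonneg hsuper hv₀ t ht => ?_⟩
  have hsup := isSupersolution_of_elliptic hlam hq.2.le ha hv hnonneg hsuper
  refine (measure_lt_le_rpow_mul hτ₀ hτ₁ ha₀ ht (measure_mono (ball_subset_ball (by norm_num)))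
    (hdecay v hsup hv₀)).trans_eq ?_
  rw [neg_neg, Real.div_rpow ht.le (by positivity), Real.rpow_neg (by positivity), mul_right_comm,
    inv_mul_eq_div, ENNReal.ofReal_mul (by positivity),
    ENNReal.ofReal_toReal measure_ball_lt_top.ne]

/-- **Krylov–Safonov weak Harnack inequality (weak `L^ε` form).** There are `ε > 0` and
`C > 0` depending only on `n, λ, Λ` such that any nonnegative `C²` supersolution of
`Σ a_{ij} ∂_{ij} v ≤ 0` in `B₁` with `v(0) ≤ 1` satisfies
`|{x ∈ B_{1/2} : v(x) > t}| ≤ C t^{−ε}` for every `t > 0`. -/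
theorem krylov_safonov_weak_harnack
    (n : ℕ) (hn : 2 ≤ n) (lam Lam : ℝ) (hlam : 0 < lam) (hLam : lam ≤ Lam) :
    ∃ ε C : ℝ, 0 < ε ∧ 0 < C ∧
      ∀ (a : Fin n → Fin n → En n → ℝ) (v : En n → ℝ),
        UnifEllipticOn (ball (0 : En n) 1) lam Lam a →
        ContDiffOn ℝ 2 v (ball (0 : En n) 1) →
        (∀ x ∈ ball (0 : En n) 1, 0 ≤ v x) →
        (∀ x ∈ ball (0 : En n) 1, ∑ i, ∑ j, a i j x * pd2 v i j x ≤ 0) →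
        v 0 ≤ 1 →
        ∀ t : ℝ, 0 < t →
          volume {x ∈ ball (0 : En n) (1 / 2) | t < v x} ≤
            ENNReal.ofReal (C * t ^ (-ε)) := by
  obtain ⟨ε, C, hε, hC, hbound⟩ := krylov_safonov_weak_harnack_general n Lam hlam
  exact ⟨ε, C, hε, hC, fun a v ha => hbound a v ha.2⟩
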